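/- Let N ∈ ℕ and let q, a, b, t ∈ ℂ satisfy b ≠ 0, (q;q)_N ≠ 0, (b;q)_{N+1} ≠ 0 and (t;q)_{N+1} ≠ 0. Then F_N(a,b;t) = (1−b)(1−tq^N) / ((1−t)(1−bq^N)) · Σ_{n=0}^{N} [N,n]_q (atq/b;q)_n (q;q)_n (b;q)_{N−n} b^n / ((tq;q)_n (b;q)_N). -/

import Mathlib

/-!
Clearing denominators, put `c = a t`. The polynomial `(bq;q)_N (t;q)_N F_N(a, b; t)` equals
`G_N(t, b, c) = ∑ n, (q;q)_N / (q;q)_{N-n} · ∏_{1 ≤ j ≤ n} (t - c q^j) · (t;q)_{N-n} (b q^{n+1};q)_{N-n}`,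
and the sum on the right-hand side of the theorem is `F_N(at/b, t; b)`, whose cleared form is
`G_N(b, t, c)`. The theorem is therefore the symmetry of `G_N` in its first two arguments.

Splitting off the term `n = 0` gives the recursion
`G_{N+1}(t, b, c) = (t;q)_{N+1} (bq;q)_{N+1} + (1 - q^{N+1}) (t - cq) G_N(t, bq, cq)`,
which serves as the definition `fineG` (`fineF_mul_eq_fineG` is the comparison). A second
induction yields a second recursion (`fineG_succ_swap`), a finite form of Fine's relation between
`F(a, b; t)` and `F(a, b; tq)`:
`G_{N+1}(t, b, c) = (b;q)_{N+1} (tq;q)_{N+1} + (1 - q^{N+1}) (b - cq) G_N(tq, b, cq)`.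
The two recursions are exchanged by `t ↔ b` once `G_N` is known to be symmetric, so symmetry
follows by induction on `N`.
-/

open Finset

/-- The q-Pochhammer symbol (z; q)_n = prod_{j=0}^{n-1} (1 - z q^j). -/
noncomputable def qPoch (q z : ℂ) (n : ℕ) : ℂ :=
  ∏ j ∈ Finset.range n, (1 - z * q ^ j)

/-- The Gaussian binomial coefficient [N, n]_q = (q;q)_N / ((q;q)_n (q;q)_{N-n}). -/
noncomputable def qBinom (q : ℂ) (N n : ℕ) : ℂ :=
  qPoch q q N / (qPoch q q n * qPoch q q (N - n))

/-- The finite analogue of Fine's function,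
F_N(a, b; t) = sum_{n=0}^{N} [N,n]_q (aq;q)_n (t;q)_{N-n} (q;q)_n t^n / ((bq;q)_n (t;q)_N). -/
noncomputable def fineF (q a b t : ℂ) (N : ℕ) : ℂ :=
  ∑ n ∈ Finset.range (N + 1),
    qBinom q N n * (qPoch q (a * q) n * qPoch q t (N - n) * qPoch q q n * t ^ n) /
      (qPoch q (b * q) n * qPoch q t N)

theorem qPoch_zero (q z : ℂ) : qPoch q z 0 = 1 := by simp [qPoch]

theorem qPoch_succ (q z : ℂ) (n : ℕ) :
    qPoch q z (n + 1) = qPoch q z n * (1 - z * q ^ n) := by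
  simp [qPoch, Finset.prod_range_succ]

theorem qPoch_succ' (q z : ℂ) (n : ℕ) :
    qPoch q z (n + 1) = (1 - z) * qPoch q (z * q) n := by
  simp only [qPoch, Finset.prod_range_succ', pow_zero, mul_one]
  rw [mul_comm]
  congr 1
  refine Finset.prod_congr rfl fun j _ => ?_
  ring

theorem qPoch_ne_zero_of_le {q z : ℂ} {m n : ℕ} (h : m ≤ n) (hn : qPoch q z n ≠ 0) :
    qPoch q z m ≠ 0 := by
  unfold qPoch at *
  rw [Finset.prod_ne_zero_iff] at *
  intro j hj
  exact hn j (Finset.mem_range.2 (lt_of_lt_of_le (Finset.mem_range.1 hj) h))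

/-- The polynomial `(bq;q)_N (t;q)_N F_N(a, b; t)` as a function of `t`, `b` and `c = a t`,
encoded through the recursion that splits off the first term of the sum. -/
noncomputable def fineG (q : ℂ) : ℕ → ℂ → ℂ → ℂ → ℂ
  | 0, _, _, _ => 1
  | N + 1, t, b, c => qPoch q t (N + 1) * qPoch q (b * q) (N + 1) +
      (1 - q ^ (N + 1)) * (t - c * q) * fineG q N t (b * q) (c * q)

/-- The second recursion for `fineG`, which moves `t` to `t q` instead of `b` to `b q`. -/
theorem fineG_succ_swap (q : ℂ) (N : ℕ) (t b c : ℂ) :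
    fineG q (N + 1) t b c = qPoch q b (N + 1) * qPoch q (t * q) (N + 1) +
      (1 - q ^ (N + 1)) * (b - c * q) * fineG q N (t * q) b (c * q) := by
  induction N generalizing t b c with
  | zero =>
    simp only [fineG, qPoch_succ, qPoch_zero]
    ring
  | succ N ih =>
    rw [fineG, ih, fineG, qPoch_succ' q t, qPoch_succ' q b, qPoch_succ q (b * q) (N + 1),
      qPoch_succ q (t * q) (N + 1)]
    ring

theorem fineG_symm (q : ℂ) (N : ℕ) (t b c : ℂ) : fineG q N t b c = fineG q N b t c := by
  induction N generalizing t b c with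
  | zero => rfl
  | succ N ih => rw [fineG_succ_swap, ih, fineG]

/-- Splitting off the term `n = 0` of the sum defining `F_{N+1}(a, b; t)`. -/
theorem fineF_succ (q a b t : ℂ) (N : ℕ) (hq : qPoch q q (N + 1) ≠ 0)
    (ht : qPoch q t (N + 1) ≠ 0) :
    fineF q a b t (N + 1) = 1 + (1 - q ^ (N + 1)) * (1 - a * q) * t /
      ((1 - b * q) * (1 - t * q ^ N)) * fineF q (a * q) (b * q) t N := by
  unfold fineF
  rw [Finset.sum_range_succ', add_comm, Finset.mul_sum]
  congr 1
  · simp only [qBinom, qPoch_zero, Nat.sub_zero, pow_zero, one_mul, mul_one]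
    rw [div_self hq, one_mul, div_self ht]
  · refine Finset.sum_congr rfl fun n hn => ?_
    have hn' : n ≤ N := Nat.lt_succ_iff.1 (Finset.mem_range.1 hn)
    have h1 := qPoch_ne_zero_of_le (Nat.succ_le_succ hn') hq
    have h2 := qPoch_ne_zero_of_le (hn'.trans N.le_succ) hq
    have h3 := qPoch_ne_zero_of_le ((Nat.sub_le N n).trans N.le_succ) hq
    have hbin : qBinom q (N + 1) (n + 1) * qPoch q q (n + 1) =
        (1 - q ^ (N + 1)) * (qBinom q N n * qPoch q q n) := by
      simp only [qBinom, Nat.add_sub_add_right]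
      rw [qPoch_succ q q N]
      field_simp
      ring
    rw [Nat.add_sub_add_right, qPoch_succ' q (a * q), qPoch_succ' q (b * q), qPoch_succ q t N]
    calc _ = (qBinom q (N + 1) (n + 1) * qPoch q q (n + 1)) *
          ((1 - a * q) * qPoch q (a * q * q) n * qPoch q t (N - n) * t ^ (n + 1)) /
          ((1 - b * q) * qPoch q (b * q * q) n * (qPoch q t N * (1 - t * q ^ N))) := by ring
      _ = _ := by
        rw [hbin, div_mul_div_comm]
        congr 1 <;> ring

theorem fineF_mul_eq_fineG (q a b t : ℂ) (N : ℕ) (hq : qPoch q q N ≠ 0)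
    (hb : qPoch q (b * q) N ≠ 0) (ht : qPoch q t N ≠ 0) :
    fineF q a b t N * (qPoch q (b * q) N * qPoch q t N) = fineG q N t b (a * t) := by
  induction N generalizing a b with
  | zero => simp [fineF, fineG, qBinom, qPoch_zero]
  | succ N ih =>
    rw [fineF_succ q a b t N hq ht, fineG]
    have hb' := hb
    have ht' := ht
    rw [qPoch_succ'] at hb'
    rw [qPoch_succ] at ht'
    have ih' := ih (a * q) (b * q) (qPoch_ne_zero_of_le N.le_succ hq)
      (right_ne_zero_of_mul hb') (left_ne_zero_of_mul ht')
    have h1 := left_ne_zero_of_mul hb'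
    have h2 := right_ne_zero_of_mul ht'
    rw [show a * t * q = a * q * t by ring, ← ih', qPoch_succ' q (b * q), qPoch_succ q t]
    generalize 1 - b * q = B at h1 ⊢
    generalize 1 - t * q ^ N = T at h2 ⊢
    field_simp

theorem fineF_lemma2fin (N : ℕ) (q a b t : ℂ) (hb0 : b ≠ 0)
    (hq : qPoch q q N ≠ 0) (hb : qPoch q b (N + 1) ≠ 0)
    (ht : qPoch q t (N + 1) ≠ 0) :
    fineF q a b t N =
      (1 - b) * (1 - t * q ^ N) / ((1 - t) * (1 - b * q ^ N)) *
        ∑ n ∈ Finset.range (N + 1),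
          qBinom q N n * (qPoch q (a * t * q / b) n * qPoch q q n * qPoch q b (N - n) * b ^ n) /
            (qPoch q (t * q) n * qPoch q b N) := by
  have hsum : ∑ n ∈ Finset.range (N + 1),
      qBinom q N n * (qPoch q (a * t * q / b) n * qPoch q q n * qPoch q b (N - n) * b ^ n) /
        (qPoch q (t * q) n * qPoch q b N) = fineF q (a * t / b) t b N := by
    unfold fineF
    refine Finset.sum_congr rfl fun n _ => ?_
    rw [show a * t * q / b = a * t / b * q by ring]
    ring
  rw [hsum]
  have eb : (1 - b) * qPoch q (b * q) N = qPoch q b N * (1 - b * q ^ N) := by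
    rw [← qPoch_succ', qPoch_succ]
  have et : (1 - t) * qPoch q (t * q) N = qPoch q t N * (1 - t * q ^ N) := by
    rw [← qPoch_succ', qPoch_succ]
  have hb1 := hb
  have ht1 := ht
  rw [qPoch_succ'] at hb1 ht1
  rw [qPoch_succ] at hb ht
  have b1 := left_ne_zero_of_mul hb1
  have b2 := right_ne_zero_of_mul hb1
  have b3 := left_ne_zero_of_mul hb
  have b4 := right_ne_zero_of_mul hb
  have t1 := left_ne_zero_of_mul ht1
  have t2 := right_ne_zero_of_mul ht1
  have t3 := left_ne_zero_of_mul ht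
  have key : fineF q a b t N * (qPoch q (b * q) N * qPoch q t N) =
      fineF q (a * t / b) t b N * (qPoch q (t * q) N * qPoch q b N) := by
    rw [fineF_mul_eq_fineG q a b t N hq b2 t3, fineF_mul_eq_fineG q _ t b N hq t2 b3,
      fineG_symm, div_mul_cancel₀ _ hb0]
  rw [div_mul_eq_mul_div, eq_div_iff (mul_ne_zero t1 b4)]
  refine mul_right_cancel₀ (mul_ne_zero (mul_ne_zero b2 t3) b3) ?_
  linear_combination (1 - t) * (1 - b * q ^ N) * qPoch q b N * key +
    fineF q (a * t / b) t b N * qPoch q b N *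
      (qPoch q b N * (1 - b * q ^ N) * et - qPoch q t N * (1 - t * q ^ N) * eb)
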